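/- (One-sided extension of the main theorem, uniform in α) Let n ≥ 1, δ ∈ (0,1), λ > 0, and let P be a fixed prior on H. Then with probability at least 1−δ over draws of D_n, the following holds simultaneously for all posteriors Q on H and all α ∈ (0,1]: R(π_Q) ≤ R̂_n^α(π_Q) + √(KL1''(π_Q,α)/(2n)) + B_n^α(π_Q) + KL2''(π_Q,α)/(nλ) + (λ/2)·V̄_n^{2α}(π_Q), where KL1''(π_Q,α) = D_KL(Q‖P) + log(8√n/(δα)), KL2''(π_Q,α) = D_KL(Q‖P) + log(8/(δα)), and V̄_n^{2α}(π_Q) = (1/n)Σ_{i=1}^n ( E_{a∼π0(·|x_i)}[π_Q(a|x_i)/π0(a|x_i)^{4α}] + π_Q(a_i|x_i)·c_i²/π0(a_i|x_i)^{4α} ). -/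

import Mathlib

/-!
Costs are nonpositive, so smoothing only shrinks the nonnegative importance-weighted losses: their
mean given the context is at most the negated cost. For nonnegative `Y` with `𝔼[Y] ≤ m`, the
inequality `exp (y - y² / 2) ≤ 1 + y` gives `𝔼[exp (Y - Y² / 2 - m)] ≤ 1`, which tensorizes over the
sample and, by the Donsker–Varadhan inequality, holds after averaging over any posterior at the
price of a divergence term. This already yields the bound for fixed `α`, without the square root,
the bias `B` and the `π₀`-average in the second moment, all of which are nonnegative.

For uniformity in `α`, mix over the grid `2⁻ʲ` with weights `2⁻⁽ʲ⁺¹⁾` and round `α` up to a grid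
point `β` with `α ≤ β ≤ 2α`. The estimator is nonincreasing in its exponent and the second moment is
nondecreasing, so rounding costs only the doubled exponent and a factor `2` in the logarithm.
-/

open MeasureTheory ProbabilityTheory Real

open Classical in
/-- Kullback–Leibler divergence between two measures, valued in `ℝ≥0∞` (junk value `⊤` when
`Q` is not absolutely continuous w.r.t. `P` or the log-likelihood ratio is not integrable). -/
noncomputable def klDiv {α : Type*} [MeasurableSpace α] (Q P : Measure α) : ENNReal :=
  if Q ≪ P ∧ Integrable (llr Q P) Q then ENNReal.ofReal (∫ x, llr Q P x ∂Q) else ⊤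

section ExponentialMoments

theorem exp_sub_sq_div_two_le_one_add {x : ℝ} (hx : 0 ≤ x) : exp (x - x ^ 2 / 2) ≤ 1 + x := by
  have hquot : x - x ^ 2 / 2 ≤ 2 * x / (x + 2) := by
    rw [le_div_iff₀ (by linarith)]
    nlinarith [pow_nonneg hx 3]
  calc
    exp (x - x ^ 2 / 2) ≤ exp (log (1 + x)) :=
      exp_le_exp.2 (hquot.trans (le_log_one_add_of_nonneg hx))
    _ = 1 + x := exp_log (by linarith)

variable {Ω : Type*} [MeasurableSpace Ω] {μ : Measure Ω} [IsProbabilityMeasure μ]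

theorem lintegral_exp_sub_sq_div_two_sub_le_one {Y : Ω → ℝ} (hY : ∀ ω, 0 ≤ Y ω) {m : ℝ}
    (hm : 0 ≤ m) (hYm : ∫⁻ ω, ENNReal.ofReal (Y ω) ∂μ ≤ ENNReal.ofReal m) :
    ∫⁻ ω, ENNReal.ofReal (exp (Y ω - Y ω ^ 2 / 2 - m)) ∂μ ≤ 1 := by
  have hpoint (ω : Ω) : ENNReal.ofReal (exp (Y ω - Y ω ^ 2 / 2 - m)) ≤
      ENNReal.ofReal (exp (-m)) * (1 + ENNReal.ofReal (Y ω)) := by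
    rw [← ENNReal.ofReal_one, ← ENNReal.ofReal_add zero_le_one (hY ω),
      ← ENNReal.ofReal_mul (exp_pos _).le, sub_eq_neg_add, exp_add]
    gcongr
    exact exp_sub_sq_div_two_le_one_add (hY ω)
  calc
    ∫⁻ ω, ENNReal.ofReal (exp (Y ω - Y ω ^ 2 / 2 - m)) ∂μ
      ≤ ENNReal.ofReal (exp (-m)) * (1 + ∫⁻ ω, ENNReal.ofReal (Y ω) ∂μ) := by
        refine (lintegral_mono hpoint).trans_eq ?_
        rw [lintegral_const_mul' _ _ ENNReal.ofReal_ne_top, lintegral_add_left measurable_const]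
        simp
    _ ≤ ENNReal.ofReal (exp (-m)) * ENNReal.ofReal (exp m) := by
        gcongr
        calc
          1 + ∫⁻ ω, ENNReal.ofReal (Y ω) ∂μ ≤ ENNReal.ofReal (1 + m) := by
            rw [ENNReal.ofReal_add zero_le_one hm, ENNReal.ofReal_one]
            gcongr
          _ ≤ ENNReal.ofReal (exp m) := by
            rw [add_comm]
            exact ENNReal.ofReal_le_ofReal (add_one_le_exp m)
    _ = 1 := by
        rw [← ENNReal.ofReal_mul (exp_pos _).le, ← exp_add, neg_add_cancel, exp_zero,
          ENNReal.ofReal_one]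

theorem lintegral_pi_exp_sum_le_one {ι : Type*} [Fintype ι] {f : Ω → ℝ} (hf : Measurable f)
    (hexp : ∫⁻ ω, ENNReal.ofReal (exp (f ω)) ∂μ ≤ 1) :
    ∫⁻ ω, ENNReal.ofReal (exp (∑ i, f (ω i))) ∂(Measure.pi fun _ : ι ↦ μ) ≤ 1 := by
  have hmeas : Measurable fun ω ↦ ENNReal.ofReal (exp (f ω)) := hf.exp.ennreal_ofReal
  simp_rw [exp_sum, ENNReal.ofReal_prod_of_nonneg fun _ _ ↦ (exp_pos _).le]
  rw [lintegral_prod_eq_prod_lintegral_of_indepFun Finset.univ _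
    (iIndepFun_pi fun _ ↦ hmeas.aemeasurable) fun i ↦ hmeas.comp (measurable_pi_apply i)]
  refine Finset.prod_le_one' fun i _ ↦ ?_
  exact ((measurePreserving_eval (fun _ : ι ↦ μ) i).lintegral_comp hmeas).trans_le hexp

end ExponentialMoments

section Markov

variable {Ω : Type*} [MeasurableSpace Ω] {μ : Measure Ω} [IsProbabilityMeasure μ]
  {δ : ℝ}

theorem ofReal_one_sub_le_measure_le_inv {g : Ω → ENNReal} (hg : AEMeasurable g μ)
    (hg1 : ∫⁻ ω, g ω ∂μ ≤ 1) (hδ : 0 < δ) :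
    ENNReal.ofReal (1 - δ) ≤ μ {ω | g ω ≤ ENNReal.ofReal δ⁻¹} := by
  have hδ0 : ENNReal.ofReal δ ≠ 0 := by simpa using hδ
  have hbad : μ {ω | g ω ≤ ENNReal.ofReal δ⁻¹}ᶜ ≤ ENNReal.ofReal δ := by
    have hmarkov := (mul_meas_ge_le_lintegral₀ hg (ENNReal.ofReal δ)⁻¹).trans hg1
    rw [ENNReal.inv_mul_le_iff hδ0 ENNReal.ofReal_ne_top, mul_one] at hmarkov
    refine (measure_mono fun ω hω ↦ ?_).trans hmarkov
    rw [Set.mem_compl_iff, Set.mem_ofPred_eq, not_le, ENNReal.ofReal_inv_of_pos hδ] at hω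
    exact hω.le
  rw [ENNReal.ofReal_sub _ hδ.le, ENNReal.ofReal_one, tsub_le_iff_right, ← measure_univ (μ := μ)]
  exact (measure_univ_le_add_compl _).trans (by gcongr)

/-- The mixture `∑' i, w i * g i` has mean at most one, so a single application of Markov's
inequality to it replaces a union bound. -/
theorem ofReal_one_sub_le_measure_forall_le_inv_mul {ι : Type*} [Countable ι] {g : ι → Ω → ENNReal}
    (hg : ∀ i, Measurable (g i)) (hg1 : ∀ i, ∫⁻ ω, g i ω ∂μ ≤ 1) {w : ι → ℝ} (hw : ∀ i, 0 < w i)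
    (hws : Summable w) (hw1 : ∑' i, w i ≤ 1) (hδ : 0 < δ) :
    ENNReal.ofReal (1 - δ) ≤ μ {ω | ∀ i, g i ω ≤ ENNReal.ofReal (δ * w i)⁻¹} := by
  have hmix : ∫⁻ ω, ∑' i, ENNReal.ofReal (w i) * g i ω ∂μ ≤ 1 :=
    calc
      ∫⁻ ω, ∑' i, ENNReal.ofReal (w i) * g i ω ∂μ
        = ∑' i, ENNReal.ofReal (w i) * ∫⁻ ω, g i ω ∂μ := by
          rw [lintegral_tsum fun i ↦ ((hg i).const_mul _).aemeasurable]
          simp_rw [lintegral_const_mul _ (hg _)]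
      _ ≤ ∑' i, ENNReal.ofReal (w i) :=
          ENNReal.tsum_le_tsum fun i ↦ mul_le_of_le_one_right' (hg1 i)
      _ ≤ 1 := by
          rw [← ENNReal.ofReal_tsum_of_nonneg (fun i ↦ (hw i).le) hws]
          exact ENNReal.ofReal_le_one.2 hw1
  refine (ofReal_one_sub_le_measure_le_inv
    (Measurable.tsum fun i ↦ (hg i).const_mul _).aemeasurable hmix hδ).trans
    (measure_mono fun ω hω i ↦ ?_)
  have hterm : ENNReal.ofReal (w i) * g i ω ≤ ENNReal.ofReal δ⁻¹ := (ENNReal.le_tsum i).trans hω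
  rw [mul_inv, ENNReal.ofReal_mul (inv_nonneg.2 hδ.le), ENNReal.ofReal_inv_of_pos (hw i),
    ← div_eq_mul_inv, ENNReal.le_div_iff_mul_le (by simp [hw i]) (by simp), mul_comm]
  exact hterm

end Markov

section PacBayes

variable {H : Type*} [MeasurableSpace H]

theorem klDiv_eq_informationTheory_klDiv (Q P : Measure H) [IsProbabilityMeasure Q]
    [IsProbabilityMeasure P] : klDiv Q P = InformationTheory.klDiv Q P := by
  simp [klDiv, InformationTheory.klDiv_def]

/-- The Donsker–Varadhan inequality: it is the nonnegativity of the divergence of `Q` from the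
exponential tilting of `P` by `f`. -/
theorem integral_le_toReal_klDiv_add_log_integral_exp {P Q : Measure H} [IsProbabilityMeasure P]
    [IsProbabilityMeasure Q] (hkl : InformationTheory.klDiv Q P ≠ ⊤) {f : H → ℝ}
    (hfQ : Integrable f Q) (hfP : Integrable (fun h ↦ exp (f h)) P) :
    ∫ h, f h ∂Q ≤ (InformationTheory.klDiv Q P).toReal + log (∫ h, exp (f h) ∂P) := by
  obtain ⟨hac, hllr⟩ := InformationTheory.klDiv_ne_top_iff.1 hkl
  have := isProbabilityMeasure_tilted hfP
  have hgibbs := InformationTheory.integral_llr_add_sub_measure_univ_nonneg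
    (hac.trans (absolutelyContinuous_tilted hfP))
    (integrable_llr_tilted_right hac hfQ hllr hfP)
  rw [integral_llr_tilted_right hac hfQ hfP hllr, probReal_univ, probReal_univ] at hgibbs
  rw [InformationTheory.toReal_klDiv_of_measure_eq hac (by simp)]
  linarith

theorem integral_le_toReal_klDiv_add_log {P Q : Measure H} [IsProbabilityMeasure P]
    [IsProbabilityMeasure Q] (hkl : InformationTheory.klDiv Q P ≠ ⊤) {f : H → ℝ}
    (hf : Measurable f) (hfQ : Integrable f Q) {B : ℝ} (hB : 0 ≤ B)
    (hexp : ∫⁻ h, ENNReal.ofReal (exp (f h)) ∂P ≤ ENNReal.ofReal B) :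
    ∫ h, f h ∂Q ≤ (InformationTheory.klDiv Q P).toReal + log B := by
  have hfP : Integrable (fun h ↦ exp (f h)) P :=
    (lintegral_ofReal_ne_top_iff_integrable hf.exp.aestronglyMeasurable
      (.of_forall fun h ↦ (exp_pos _).le)).1 (hexp.trans_lt ENNReal.ofReal_lt_top).ne
  have hle : ∫ h, exp (f h) ∂P ≤ B := by
    rw [integral_eq_lintegral_of_nonneg_ae (.of_forall fun h ↦ (exp_pos _).le)
      hf.exp.aestronglyMeasurable]
    exact ENNReal.toReal_le_of_le_ofReal hB hexp
  refine (integral_le_toReal_klDiv_add_log_integral_exp hkl hfQ hfP).trans ?_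
  gcongr
  exact integral_exp_pos hfP

variable {ι : Type*} [Countable ι] (P : Measure H) [IsProbabilityMeasure P] {w : ι → ℝ} {δ : ℝ}

theorem pac_bayes_of_lintegral_exp_le_one {Ω : Type*} [MeasurableSpace Ω] (μ : Measure Ω)
    [IsProbabilityMeasure μ] {F : ι → H → Ω → ℝ}
    (hF : ∀ i, Measurable (Function.uncurry (F i)))
    (hexp : ∀ i h, ∫⁻ ω, ENNReal.ofReal (exp (F i h ω)) ∂μ ≤ 1)
    (hw : ∀ i, 0 < w i) (hws : Summable w) (hw1 : ∑' i, w i ≤ 1) (hδ : 0 < δ) :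
    ENNReal.ofReal (1 - δ) ≤ μ {ω | ∀ Q : Measure H, IsProbabilityMeasure Q →
      InformationTheory.klDiv Q P ≠ ⊤ → ∀ i, Integrable (fun h ↦ F i h ω) Q →
        ∫ h, F i h ω ∂Q ≤ (InformationTheory.klDiv Q P).toReal + log (δ * w i)⁻¹} := by
  have hmeas (i : ι) : Measurable (Function.uncurry fun h ω ↦ ENNReal.ofReal (exp (F i h ω))) :=
    (hF i).exp.ennreal_ofReal
  have hmean (i : ι) : ∫⁻ ω, ∫⁻ h, ENNReal.ofReal (exp (F i h ω)) ∂P ∂μ ≤ 1 := by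
    rw [← lintegral_lintegral_swap (hmeas i).aemeasurable]
    exact (lintegral_mono (hexp i)).trans_eq (by simp)
  refine (ofReal_one_sub_le_measure_forall_le_inv_mul (fun i ↦ (hmeas i).lintegral_prod_left)
    hmean hw hws hw1 hδ).trans (measure_mono fun ω hω Q hQ hkl i hint ↦ ?_)
  have hwi := hw i
  exact integral_le_toReal_klDiv_add_log hkl ((hF i).comp measurable_prodMk_right) hint
    (by positivity) (hω i)

theorem pac_bayes_lower_tail_of_nonneg {Z : Type*} [MeasurableSpace Z] (μ : Measure Z)
    [IsProbabilityMeasure μ] (n : ℕ) {L : ι → H → Z → ℝ}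
    (hL : ∀ i, Measurable (Function.uncurry (L i))) (hL0 : ∀ i h z, 0 ≤ L i h z)
    {m : H → ℝ} (hm : Measurable m) (hm0 : ∀ h, 0 ≤ m h)
    (hmean : ∀ i h, ∫⁻ z, ENNReal.ofReal (L i h z) ∂μ ≤ ENNReal.ofReal (m h))
    (hw : ∀ i, 0 < w i) (hws : Summable w) (hw1 : ∑' i, w i ≤ 1) (hδ : 0 < δ) :
    ENNReal.ofReal (1 - δ) ≤ (Measure.pi fun _ : Fin n ↦ μ) {ω | ∀ Q : Measure H,
      IsProbabilityMeasure Q → InformationTheory.klDiv Q P ≠ ⊤ → ∀ i,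
        (∀ k, Integrable (fun h ↦ L i h (ω k) - L i h (ω k) ^ 2 / 2 - m h) Q) →
          ∑ k, ∫ h, (L i h (ω k) - L i h (ω k) ^ 2 / 2 - m h) ∂Q
            ≤ (InformationTheory.klDiv Q P).toReal + log (δ * w i)⁻¹} := by
  have hstep (i : ι) : Measurable fun q : H × Z ↦ L i q.1 q.2 - L i q.1 q.2 ^ 2 / 2 - m q.1 :=
    ((hL i).sub (((hL i).pow_const 2).div_const 2)).sub (hm.comp measurable_fst)
  have hF (i : ι) : Measurable (Function.uncurry fun h (ω : Fin n → Z) ↦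
      ∑ k, (L i h (ω k) - L i h (ω k) ^ 2 / 2 - m h)) :=
    Finset.measurable_fun_sum _ fun k _ ↦ (hstep i).comp
      (measurable_fst.prodMk ((measurable_pi_apply k).comp measurable_snd))
  refine (pac_bayes_of_lintegral_exp_le_one P (Measure.pi fun _ : Fin n ↦ μ) hF (fun i h ↦ ?_)
    hw hws hw1 hδ).trans (measure_mono fun ω hω Q hQ hkl i hint ↦ ?_)
  · exact lintegral_pi_exp_sum_le_one ((hstep i).comp measurable_prodMk_left)
      (lintegral_exp_sub_sq_div_two_sub_le_one (hL0 i h) (hm0 h) (hmean i h))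
  · rw [← integral_finsetSum _ fun k _ ↦ hint k]
    exact hω Q hQ hkl i (integrable_finsetSum _ fun k _ ↦ hint k)

end PacBayes

section Selection

variable {T A : Type*} [MeasurableSpace T] [MeasurableSpace A] [MeasurableSingletonClass A]
  {μ : Measure T} {g : T → A}

theorem measurable_selection [Countable A] {f : T → A → ℝ} (hf : ∀ a, Measurable fun t ↦ f t a)
    (hg : Measurable g) : Measurable fun t ↦ f t (g t) :=
  (measurable_from_prod_countable_left (f := Function.uncurry f) hf).comp
    (measurable_id.prodMk hg)

theorem integrable_selection [Finite A] {f : T → A → ℝ} (hf : ∀ a, Integrable (fun t ↦ f t a) μ)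
    (hg : Measurable g) : Integrable (fun t ↦ f t (g t)) μ := by
  classical
  have := Fintype.ofFinite A
  have hsum : (fun t ↦ f t (g t)) = fun t ↦ ∑ a, (g ⁻¹' {a}).indicator (fun t ↦ f t a) t := by
    ext t
    simp [Set.indicator_apply]
  rw [hsum]
  exact integrable_finsetSum _ fun a _ ↦ (hf a).indicator (hg (measurableSet_singleton a))

theorem integrable_comp_of_finite [Finite A] [IsFiniteMeasure μ] (hg : Measurable g) (f : A → ℝ) :
    Integrable (fun t ↦ f (g t)) μ :=
  (Integrable.of_finite (μ := μ.map g)).comp_measurable hg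

theorem integral_comp_eq_sum [Fintype A] [IsFiniteMeasure μ] (hg : Measurable g) (f : A → ℝ) :
    ∫ t, f (g t) ∂μ = ∑ a, (μ {t | g t = a}).toReal * f a := by
  rw [← integral_map hg.aemeasurable (measurable_of_countable f).aestronglyMeasurable,
    integral_fintype .of_finite]
  exact Finset.sum_congr rfl fun a _ ↦ by
    rw [map_measureReal_apply hg (measurableSet_singleton a)]; rfl

end Selection

section OffPolicy

variable {X A H : Type*} [MeasurableSpace H]

/-- The policy `π_Q(a|x) = Q({h : h(x) = a})` induced by a distribution `Q` on hypotheses, where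
`ev h x` is the action `h(x)`. -/
noncomputable def gibbsPolicy (ev : H → X → A) (Q : Measure H) (x : X) (a : A) : ℝ :=
  (Q {h | ev h x = a}).toReal

theorem gibbsPolicy_nonneg {ev : H → X → A} (Q : Measure H) (x : X) (a : A) :
    0 ≤ gibbsPolicy ev Q x a :=
  ENNReal.toReal_nonneg

variable [MeasurableSpace X]

/-- The risk `R(π)`; a policy is encoded by its table `π x a` of action probabilities. -/
noncomputable def policyRisk [Fintype A] (ν : Measure X) (c pol : X → A → ℝ) : ℝ :=
  ∫ x, ∑ a, pol x a * c x a ∂ν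

variable [MeasurableSpace A]

/-- The `α`-smoothed inverse propensity score estimator `R̂_n^α(π)` on the logged data `ω`. -/
noncomputable def ipsEstimate (π₀ : Kernel X A) (c pol : X → A → ℝ) (α : ℝ) {n : ℕ}
    (ω : Fin n → X × A) : ℝ :=
  (n : ℝ)⁻¹ * ∑ i, c (ω i).1 (ω i).2 * pol (ω i).1 (ω i).2 / (π₀ (ω i).1).real {(ω i).2} ^ α

/-- The logged part of the second moment term `V̄_n^γ(π)`. As in the paper, the propensities carry
the exponent `2γ`. -/
noncomputable def ipsSecondMoment (π₀ : Kernel X A) (c pol : X → A → ℝ) (γ : ℝ) {n : ℕ}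
    (ω : Fin n → X × A) : ℝ :=
  (n : ℝ)⁻¹ * ∑ i, pol (ω i).1 (ω i).2 * c (ω i).1 (ω i).2 ^ 2
    / (π₀ (ω i).1).real {(ω i).2} ^ (2 * γ)

open Classical in
/-- The smoothed importance-weighted loss, on a logged pair `z`, of a policy playing `b`
in the context `z.1`. The sign makes losses nonnegative when costs are nonpositive. -/
noncomputable def ipsLoss (π₀ : Kernel X A) (c : X → A → ℝ) (α : ℝ) (b : A) (z : X × A) : ℝ :=
  if z.2 = b then -c z.1 z.2 / (π₀ z.1).real {z.2} ^ α else 0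

variable {π₀ : Kernel X A} {c : X → A → ℝ} {ev : H → X → A} {α : ℝ}

theorem ipsLoss_nonneg (hc : ∀ x a, c x a ≤ 0) (b : A) (z : X × A) :
    0 ≤ ipsLoss π₀ c α b z := by
  unfold ipsLoss
  split_ifs
  · exact div_nonneg (neg_nonneg.2 (hc _ _)) (rpow_nonneg measureReal_nonneg _)
  · rfl

theorem policyRisk_le_of_sum_le [Fintype A] {ν : Measure X} {pol : X → A → ℝ} {n : ℕ} {lam : ℝ}
    (hn : 1 ≤ n) (hlam : 0 < lam) {M : ℝ} {ω : Fin n → X × A}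
    (h : ∑ i, lam * (policyRisk ν c pol
        - c (ω i).1 (ω i).2 * pol (ω i).1 (ω i).2 / (π₀ (ω i).1).real {(ω i).2} ^ α
        - lam / 2 * (pol (ω i).1 (ω i).2 * c (ω i).1 (ω i).2 ^ 2
          / (π₀ (ω i).1).real {(ω i).2} ^ (2 * α))) ≤ M) :
    policyRisk ν c pol
      ≤ ipsEstimate π₀ c pol α ω + M / (n * lam) + lam / 2 * ipsSecondMoment π₀ c pol α ω := by
  have hn0 : (0 : ℝ) < n := by exact_mod_cast hn
  rw [← Finset.mul_sum, Finset.sum_sub_distrib, Finset.sum_sub_distrib, ← Finset.mul_sum,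
    Finset.sum_const, Finset.card_univ, Fintype.card_fin, nsmul_eq_mul] at h
  have hdiv := div_le_div_of_nonneg_right h (mul_pos hn0 hlam).le
  rw [mul_comm (n : ℝ) lam, mul_div_mul_left _ _ hlam.ne', sub_div, sub_div,
    mul_div_cancel_left₀ _ hn0.ne', mul_comm lam] at hdiv
  unfold ipsEstimate ipsSecondMoment
  simp only [div_eq_inv_mul _ (n : ℝ)] at hdiv
  linarith

theorem ipsSecondMoment_le_add_sum [Fintype A] {pol : X → A → ℝ} (hpol : ∀ x a, 0 ≤ pol x a)
    {n : ℕ} (ω : Fin n → X × A) :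
    ipsSecondMoment π₀ c pol α ω ≤ (n : ℝ)⁻¹ * ∑ i,
      ((∑ a, (π₀ (ω i).1).real {a} * (pol (ω i).1 a / (π₀ (ω i).1).real {a} ^ (2 * α)))
        + pol (ω i).1 (ω i).2 * c (ω i).1 (ω i).2 ^ 2 / (π₀ (ω i).1).real {(ω i).2} ^ (2 * α)) := by
  unfold ipsSecondMoment
  gcongr with i
  exact le_add_of_nonneg_left (Finset.sum_nonneg fun a _ ↦ mul_nonneg measureReal_nonneg
    (div_nonneg (hpol _ a) (rpow_nonneg measureReal_nonneg _)))

section Monotonicity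

theorem inv_rpow_le_inv_rpow_of_exponent_le {p β γ : ℝ} (hp0 : 0 ≤ p) (hp1 : p ≤ 1) (hβ : 0 < β)
    (hβγ : β ≤ γ) : (p ^ β)⁻¹ ≤ (p ^ γ)⁻¹ := by
  obtain rfl | hp := hp0.eq_or_lt
  · rw [zero_rpow hβ.ne', zero_rpow (hβ.trans_le hβγ).ne']
  · exact inv_anti₀ (rpow_pos_of_pos hp γ) (rpow_le_rpow_of_exponent_ge hp hp1 hβγ)

variable [IsMarkovKernel π₀] {pol : X → A → ℝ} {β γ : ℝ} {n : ℕ}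

theorem ipsEstimate_le_ipsEstimate (hc : ∀ x a, c x a ≤ 0) (hpol : ∀ x a, 0 ≤ pol x a) (hα : 0 < α)
    (hαβ : α ≤ β) (ω : Fin n → X × A) :
    ipsEstimate π₀ c pol β ω ≤ ipsEstimate π₀ c pol α ω := by
  unfold ipsEstimate
  simp_rw [div_eq_mul_inv]
  refine mul_le_mul_of_nonneg_left (Finset.sum_le_sum fun i _ ↦ ?_) (by positivity)
  exact mul_le_mul_of_nonpos_left
    (inv_rpow_le_inv_rpow_of_exponent_le measureReal_nonneg measureReal_le_one hα hαβ)
    (mul_nonpos_of_nonpos_of_nonneg (hc _ _) (hpol _ _))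

theorem ipsSecondMoment_le_ipsSecondMoment (hpol : ∀ x a, 0 ≤ pol x a) (hβ : 0 < β) (hβγ : β ≤ γ)
    (ω : Fin n → X × A) : ipsSecondMoment π₀ c pol β ω ≤ ipsSecondMoment π₀ c pol γ ω := by
  unfold ipsSecondMoment
  simp_rw [div_eq_mul_inv]
  refine mul_le_mul_of_nonneg_left (Finset.sum_le_sum fun i _ ↦ ?_) (by positivity)
  exact mul_le_mul_of_nonneg_left (inv_rpow_le_inv_rpow_of_exponent_le measureReal_nonneg
    measureReal_le_one (by positivity) (by gcongr)) (mul_nonneg (hpol _ _) (sq_nonneg _))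

end Monotonicity

variable [MeasurableSingletonClass A]

theorem measurable_ipsLoss [Countable A] (hc : ∀ a, Measurable fun x ↦ c x a) :
    Measurable (Function.uncurry (ipsLoss π₀ c α)) := by
  refine measurable_from_prod_countable_right fun b ↦
    measurable_from_prod_countable_left fun a ↦ ?_
  by_cases hab : a = b
  · simp only [Function.uncurry_apply_pair, ipsLoss, if_pos hab]
    exact (hc a).neg.div
      ((π₀.measurable_coe (measurableSet_singleton a)).ennreal_toReal.pow_const α)
  · simp only [Function.uncurry_apply_pair, ipsLoss, if_neg hab, measurable_const]

section ConditionalMean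

variable [Finite A] [IsMarkovKernel π₀] {ν : Measure X}

theorem lintegral_ipsLoss_le (hα0 : 0 ≤ α) (hα1 : α ≤ 1) (hc : ∀ x a, c x a ≤ 0) (x : X) (b : A) :
    ∫⁻ a, ENNReal.ofReal (ipsLoss π₀ c α b (x, a)) ∂π₀ x ≤ ENNReal.ofReal (-c x b) := by
  have := Fintype.ofFinite A
  set p := (π₀ x).real {b} with hp
  have hp0 : 0 ≤ p := measureReal_nonneg
  have hratio : p / p ^ α ≤ 1 := by
    refine div_le_one_of_le₀ ?_ (rpow_nonneg hp0 α)
    simpa using rpow_le_rpow_of_exponent_ge' hp0 measureReal_le_one hα0 hα1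
  calc
    ∫⁻ a, ENNReal.ofReal (ipsLoss π₀ c α b (x, a)) ∂π₀ x
      = ENNReal.ofReal (-c x b / p ^ α) * ENNReal.ofReal p := by
        rw [lintegral_fintype, Finset.sum_eq_single b (by simp +contextual [ipsLoss]) (by simp), hp,
          ofReal_measureReal]
        simp [ipsLoss]
    _ = ENNReal.ofReal (-c x b * (p / p ^ α)) := by
        rw [← ENNReal.ofReal_mul' hp0, div_mul_eq_mul_div, mul_div_assoc]
    _ ≤ ENNReal.ofReal (-c x b) :=
        ENNReal.ofReal_le_ofReal (mul_le_of_le_one_right (neg_nonneg.2 (hc x b)) hratio)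

theorem lintegral_compProd_ipsLoss_le [SFinite ν] (hα0 : 0 ≤ α) (hα1 : α ≤ 1)
    (hcmeas : ∀ a, Measurable fun x ↦ c x a) (hcint : ∀ a, Integrable (fun x ↦ c x a) ν)
    (hc : ∀ x a, c x a ≤ 0) {g : X → A} (hg : Measurable g) :
    ∫⁻ z, ENNReal.ofReal (ipsLoss π₀ c α (g z.1) z) ∂(ν ⊗ₘ π₀)
      ≤ ENNReal.ofReal (-∫ x, c x (g x) ∂ν) := by
  have hmeas : Measurable fun z : X × A ↦ ENNReal.ofReal (ipsLoss π₀ c α (g z.1) z) :=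
    ((measurable_ipsLoss hcmeas).comp
      ((hg.comp measurable_fst).prodMk measurable_id)).ennreal_ofReal
  have hint : Integrable (fun x ↦ -c x (g x)) ν := (integrable_selection hcint hg).neg
  rw [Measure.lintegral_compProd hmeas, ← integral_neg,
    ofReal_integral_eq_lintegral_ofReal hint (.of_forall fun x ↦ neg_nonneg.2 (hc _ _))]
  exact lintegral_mono fun x ↦ lintegral_ipsLoss_le hα0 hα1 hc x (g x)

end ConditionalMean

section PosteriorMean

variable {Q : Measure H} [IsProbabilityMeasure Q]

theorem integral_comp_eval_eq_sum_gibbsPolicy [Fintype A]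
    (hev : Measurable fun q : H × X ↦ ev q.1 q.2) (x : X) (f : A → ℝ) :
    ∫ h, f (ev h x) ∂Q = ∑ a, gibbsPolicy ev Q x a * f a :=
  integral_comp_eq_sum (hev.comp measurable_prodMk_right) f

theorem integral_ipsLoss_gibbs [Finite A] (hev : Measurable fun q : H × X ↦ ev q.1 q.2)
    (z : X × A) :
    ∫ h, ipsLoss π₀ c α (ev h z.1) z ∂Q
      = -(c z.1 z.2 * gibbsPolicy ev Q z.1 z.2 / (π₀ z.1).real {z.2} ^ α) := by
  classical
  have := Fintype.ofFinite A
  rw [integral_comp_eval_eq_sum_gibbsPolicy hev z.1 fun b ↦ ipsLoss π₀ c α b z]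
  simp only [ipsLoss, mul_ite, mul_zero, Finset.sum_ite_eq, Finset.mem_univ, if_true]
  ring

theorem integral_ipsLoss_sq_gibbs [Finite A] (hev : Measurable fun q : H × X ↦ ev q.1 q.2)
    (z : X × A) :
    ∫ h, ipsLoss π₀ c α (ev h z.1) z ^ 2 ∂Q
      = gibbsPolicy ev Q z.1 z.2 * c z.1 z.2 ^ 2 / (π₀ z.1).real {z.2} ^ (2 * α) := by
  classical
  have := Fintype.ofFinite A
  have hsq : (π₀ z.1).real {z.2} ^ (2 * α) = ((π₀ z.1).real {z.2} ^ α) ^ 2 := by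
    rw [mul_comm, ← rpow_mul_natCast measureReal_nonneg, Nat.cast_ofNat]
  rw [integral_comp_eval_eq_sum_gibbsPolicy hev z.1 fun b ↦ ipsLoss π₀ c α b z ^ 2, hsq]
  simp only [ipsLoss, ite_pow, mul_ite, mul_zero, ne_eq, OfNat.ofNat_ne_zero, not_false_eq_true,
    zero_pow, Finset.sum_ite_eq, Finset.mem_univ, if_true]
  ring

variable {ν : Measure X} [SFinite ν]

theorem integrable_cost_comp_eval_prod [Finite A] (hcint : ∀ a, Integrable (fun x ↦ c x a) ν)
    (hev : Measurable fun q : H × X ↦ ev q.1 q.2) :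
    Integrable (Function.uncurry fun h x ↦ c x (ev h x)) (Q.prod ν) :=
  integrable_selection (f := fun q : H × X ↦ c q.2) (fun a ↦ (hcint a).comp_snd Q) hev

theorem integral_risk_gibbs [Fintype A] (hcint : ∀ a, Integrable (fun x ↦ c x a) ν)
    (hev : Measurable fun q : H × X ↦ ev q.1 q.2) :
    ∫ h, ∫ x, c x (ev h x) ∂ν ∂Q = policyRisk ν c (gibbsPolicy ev Q) := by
  rw [integral_integral_swap (integrable_cost_comp_eval_prod hcint hev)]
  exact integral_congr_ae (.of_forall fun x ↦ integral_comp_eval_eq_sum_gibbsPolicy hev x (c x))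

theorem integrable_ipsLoss_sub_sq_sub_risk [Finite A] (hcint : ∀ a, Integrable (fun x ↦ c x a) ν)
    (hev : Measurable fun q : H × X ↦ ev q.1 q.2) (lam : ℝ) (z : X × A) :
    Integrable (fun h ↦ lam * ipsLoss π₀ c α (ev h z.1) z
      - (lam * ipsLoss π₀ c α (ev h z.1) z) ^ 2 / 2 - lam * -∫ x, c x (ev h x) ∂ν) Q :=
  (integrable_comp_of_finite (hev.comp measurable_prodMk_right) fun b ↦
    lam * ipsLoss π₀ c α b z - (lam * ipsLoss π₀ c α b z) ^ 2 / 2).sub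
    ((integrable_cost_comp_eval_prod hcint hev).integral_prod_left.neg.const_mul lam)

theorem integral_ipsLoss_sub_sq_sub_risk [Fintype A] (hcint : ∀ a, Integrable (fun x ↦ c x a) ν)
    (hev : Measurable fun q : H × X ↦ ev q.1 q.2) (lam : ℝ) (z : X × A) :
    ∫ h, (lam * ipsLoss π₀ c α (ev h z.1) z
        - (lam * ipsLoss π₀ c α (ev h z.1) z) ^ 2 / 2 - lam * -∫ x, c x (ev h x) ∂ν) ∂Q
      = lam * (policyRisk ν c (gibbsPolicy ev Q)
        - c z.1 z.2 * gibbsPolicy ev Q z.1 z.2 / (π₀ z.1).real {z.2} ^ α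
        - lam / 2 * (gibbsPolicy ev Q z.1 z.2 * c z.1 z.2 ^ 2
          / (π₀ z.1).real {z.2} ^ (2 * α))) := by
  have hevz : Measurable fun h ↦ ev h z.1 := hev.comp measurable_prodMk_right
  have hloss : Integrable (fun h ↦ lam * ipsLoss π₀ c α (ev h z.1) z) Q :=
    integrable_comp_of_finite hevz fun b ↦ lam * ipsLoss π₀ c α b z
  have hsq : Integrable (fun h ↦ lam ^ 2 * ipsLoss π₀ c α (ev h z.1) z ^ 2 / 2) Q :=
    integrable_comp_of_finite hevz fun b ↦ lam ^ 2 * ipsLoss π₀ c α b z ^ 2 / 2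
  have hdiff : Integrable (fun h ↦ lam * ipsLoss π₀ c α (ev h z.1) z
      - lam ^ 2 * ipsLoss π₀ c α (ev h z.1) z ^ 2 / 2) Q := hloss.sub hsq
  have hrisk : Integrable (fun h ↦ lam * -∫ x, c x (ev h x) ∂ν) Q :=
    (integrable_cost_comp_eval_prod hcint hev).integral_prod_left.neg.const_mul lam
  simp_rw [mul_pow]
  rw [integral_sub hdiff hrisk, integral_sub hloss hsq, integral_div,
    integral_const_mul, integral_const_mul, integral_const_mul, integral_neg,
    integral_ipsLoss_gibbs hev, integral_ipsLoss_sq_gibbs hev, integral_risk_gibbs hcint hev]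
  ring

end PosteriorMean

section Bounds

variable [Fintype A] {ν : Measure X} [IsProbabilityMeasure ν] [IsMarkovKernel π₀] {n : ℕ}
  {δ lam : ℝ}

theorem pac_bayes_ips_of_countable {ι : Type*} [Countable ι] {α : ι → ℝ}
    (hα : ∀ i, α i ∈ Set.Icc (0 : ℝ) 1) {w : ι → ℝ} (hw : ∀ i, 0 < w i) (hws : Summable w)
    (hw1 : ∑' i, w i ≤ 1) (hcmeas : ∀ a, Measurable fun x ↦ c x a)
    (hcint : ∀ a, Integrable (fun x ↦ c x a) ν) (hc : ∀ x a, c x a ≤ 0)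
    (hev : Measurable fun q : H × X ↦ ev q.1 q.2) (P : Measure H) [IsProbabilityMeasure P]
    (hn : 1 ≤ n) (hδ : 0 < δ) (hlam : 0 < lam) :
    ENNReal.ofReal (1 - δ) ≤ (Measure.pi fun _ : Fin n ↦ ν ⊗ₘ π₀) {ω | ∀ Q : Measure H,
      IsProbabilityMeasure Q → InformationTheory.klDiv Q P ≠ ⊤ → ∀ i,
        policyRisk ν c (gibbsPolicy ev Q) ≤ ipsEstimate π₀ c (gibbsPolicy ev Q) (α i) ω
          + ((InformationTheory.klDiv Q P).toReal + log (δ * w i)⁻¹) / (n * lam)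
          + lam / 2 * ipsSecondMoment π₀ c (gibbsPolicy ev Q) (α i) ω} := by
  have hL (i : ι) : Measurable (Function.uncurry fun h (z : X × A) ↦
      lam * ipsLoss π₀ c (α i) (ev h z.1) z) :=
    ((measurable_ipsLoss hcmeas).comp ((hev.comp
      (measurable_fst.prodMk measurable_snd.fst)).prodMk measurable_snd)).const_mul lam
  have hL0 (i : ι) (h : H) (z : X × A) : 0 ≤ lam * ipsLoss π₀ c (α i) (ev h z.1) z :=
    mul_nonneg hlam.le (ipsLoss_nonneg hc _ _)
  have hm : Measurable fun h ↦ lam * -∫ x, c x (ev h x) ∂ν :=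
    (measurable_selection (f := fun q : H × X ↦ c q.2) (fun a ↦ (hcmeas a).comp measurable_snd)
      hev).stronglyMeasurable.integral_prod_right.measurable.neg.const_mul lam
  have hm0 (h : H) : 0 ≤ lam * -∫ x, c x (ev h x) ∂ν :=
    mul_nonneg hlam.le (neg_nonneg.2 (integral_nonpos fun x ↦ hc _ _))
  have hmean (i : ι) (h : H) : ∫⁻ z, ENNReal.ofReal (lam * ipsLoss π₀ c (α i) (ev h z.1) z)
      ∂(ν ⊗ₘ π₀) ≤ ENNReal.ofReal (lam * -∫ x, c x (ev h x) ∂ν) := by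
    simp_rw [ENNReal.ofReal_mul hlam.le]
    rw [lintegral_const_mul' _ _ ENNReal.ofReal_ne_top]
    gcongr
    exact lintegral_compProd_ipsLoss_le (hα i).1 (hα i).2 hcmeas hcint hc
      (hev.comp measurable_prodMk_left)
  refine (pac_bayes_lower_tail_of_nonneg P (ν ⊗ₘ π₀) n hL hL0 hm hm0 hmean hw hws hw1 hδ).trans
    (measure_mono fun ω hω Q hQ hkl i ↦ policyRisk_le_of_sum_le hn hlam ?_)
  simpa only [integral_ipsLoss_sub_sq_sub_risk hcint hev] using
    hω Q hQ hkl i fun k ↦ integrable_ipsLoss_sub_sq_sub_risk hcint hev lam (ω k)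

theorem pac_bayes_ips_alpha_uniform_alpha_general (hcmeas : ∀ a, Measurable fun x ↦ c x a)
    (hcint : ∀ a, Integrable (fun x ↦ c x a) ν) (hc : ∀ x a, c x a ≤ 0)
    (hev : Measurable fun q : H × X ↦ ev q.1 q.2) (P : Measure H) [IsProbabilityMeasure P]
    (hn : 1 ≤ n) (hδ : 0 < δ) (hlam : 0 < lam) :
    ENNReal.ofReal (1 - δ) ≤ (Measure.pi fun _ : Fin n ↦ ν ⊗ₘ π₀) {ω | ∀ Q : Measure H,
      IsProbabilityMeasure Q → InformationTheory.klDiv Q P ≠ ⊤ →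
        ∀ α : ℝ, α ∈ Set.Ioc (0 : ℝ) 1 →
        policyRisk ν c (gibbsPolicy ev Q) ≤ ipsEstimate π₀ c (gibbsPolicy ev Q) α ω
          + ((InformationTheory.klDiv Q P).toReal + log (2 / (δ * α))) / (n * lam)
          + lam / 2 * ipsSecondMoment π₀ c (gibbsPolicy ev Q) (2 * α) ω} := by
  have hgrid (j : ℕ) : (1 / 2 : ℝ) ^ j ∈ Set.Icc (0 : ℝ) 1 :=
    ⟨by positivity, pow_le_one₀ (by norm_num) (by norm_num)⟩
  have hsum : HasSum (fun j : ℕ ↦ (1 / 2 : ℝ) ^ j / 2) 1 := by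
    simpa using hasSum_geometric_two.div_const 2
  refine (pac_bayes_ips_of_countable hgrid (fun j ↦ by positivity) hsum.summable hsum.tsum_eq.le
    hcmeas hcint hc hev P hn hδ hlam).trans (measure_mono fun ω hω Q hQ hkl α hα ↦ ?_)
  have hα0 : 0 < α := hα.1
  obtain ⟨j, hjα, hαj⟩ := exists_nat_pow_near_of_lt_one hα.1 hα.2
    (by norm_num : (0 : ℝ) < 1 / 2) (by norm_num)
  set β : ℝ := (1 / 2) ^ j
  have hβα : β ≤ 2 * α := by
    rw [pow_succ] at hjα
    linarith
  have hlog : log (δ * (β / 2))⁻¹ ≤ log (2 / (δ * α)) := by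
    have hinv : (δ * (β / 2))⁻¹ = 2 / (δ * β) := by field_simp
    rw [hinv]
    gcongr
  refine (hω Q hQ hkl j).trans ?_
  gcongr
  · exact ipsEstimate_le_ipsEstimate hc (gibbsPolicy_nonneg Q) hα0 hαj ω
  · exact ipsSecondMoment_le_ipsSecondMoment (gibbsPolicy_nonneg Q) (by positivity) hβα ω

end Bounds

section Slack

variable [Fintype A] {Q : Measure H} [IsProbabilityMeasure Q] {n : ℕ}

theorem sum_gibbsPolicy (hev : Measurable fun q : H × X ↦ ev q.1 q.2) (x : X) :
    ∑ a, gibbsPolicy ev Q x a = 1 := by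
  simpa using (integral_comp_eval_eq_sum_gibbsPolicy (Q := Q) hev x fun _ ↦ 1).symm

variable [IsMarkovKernel π₀]

theorem sum_gibbsPolicy_mul_rpow_le_one (hev : Measurable fun q : H × X ↦ ev q.1 q.2) (hα : α ≤ 1)
    (x : X) : ∑ a, gibbsPolicy ev Q x a * (π₀ x).real {a} ^ (1 - α) ≤ 1 := by
  refine (Finset.sum_le_sum fun a _ ↦ ?_).trans_eq (sum_gibbsPolicy (Q := Q) hev x)
  exact mul_le_of_le_one_right (gibbsPolicy_nonneg Q x a)
    (rpow_le_one measureReal_nonneg measureReal_le_one (sub_nonneg.2 hα))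

theorem ips_bias_nonneg (hev : Measurable fun q : H × X ↦ ev q.1 q.2) (hα : α ≤ 1)
    (ω : Fin n → X × A) :
    0 ≤ 1 - (n : ℝ)⁻¹ * ∑ i, ∑ a,
      gibbsPolicy ev Q (ω i).1 a * (π₀ (ω i).1).real {a} ^ (1 - α) := by
  rw [sub_nonneg]
  calc
    _ ≤ (n : ℝ)⁻¹ * ∑ _i : Fin n, 1 := by
      gcongr
      exact sum_gibbsPolicy_mul_rpow_le_one hev hα _
    _ ≤ 1 := by simpa using inv_mul_le_one

end Slack

end OffPolicy

/-- **One-sided extension of the main theorem, uniform in `α`.**  With probability at least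
`1 − δ` over the logged data, the one-sided PAC-Bayes bound holds simultaneously for all
posteriors `Q` on `H` (with finite KL divergence to the prior) and all `α ∈ (0,1]`, where the
second-moment term is evaluated at `2α` (i.e. with exponent `4α` in the denominator). -/
theorem pac_bayes_ips_alpha_uniform_alpha
    {X : Type*} [MeasurableSpace X] {K : ℕ}
    {H : Type*} [MeasurableSpace H]
    (ν : Measure X) [IsProbabilityMeasure ν]
    (p0 c : X → Fin K → ℝ)
    (hp0meas : ∀ a, Measurable fun x => p0 x a)
    (hcmeas : ∀ a, Measurable fun x => c x a)
    (hp0pos : ∀ x a, 0 < p0 x a) (hp0sum : ∀ x, ∑ a, p0 x a = 1)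
    (hc : ∀ x a, c x a ∈ Set.Icc (-1 : ℝ) 0)
    (ev : H → X → Fin K)
    (hev : Measurable fun q : H × X => ev q.1 q.2)
    (κ0 : Kernel X (Fin K)) [IsMarkovKernel κ0]
    (hκ0 : ∀ x a, κ0 x {a} = ENNReal.ofReal (p0 x a))
    (P : Measure H) [IsProbabilityMeasure P]
    (n : ℕ) (hn : 1 ≤ n)
    (δ : ℝ) (hδ : δ ∈ Set.Ioo (0 : ℝ) 1) (lam : ℝ) (hlam : 0 < lam) :
    ENNReal.ofReal (1 - δ) ≤
      (Measure.pi fun _ : Fin n => ν ⊗ₘ κ0)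
        {ω | ∀ Q : Measure H, IsProbabilityMeasure Q → klDiv Q P ≠ ⊤ →
          ∀ α : ℝ, α ∈ Set.Ioc (0 : ℝ) 1 →
          (∫ x, ∑ a, (Q {h | ev h x = a}).toReal * c x a ∂ν)
            ≤ (n : ℝ)⁻¹ * ∑ i, c (ω i).1 (ω i).2 * (Q {h | ev h (ω i).1 = (ω i).2}).toReal
                  / p0 (ω i).1 (ω i).2 ^ α
              + Real.sqrt (((klDiv Q P).toReal + Real.log (8 * Real.sqrt n / (δ * α)))
                  / (2 * n))
              + (1 - (n : ℝ)⁻¹ * ∑ i, ∑ a,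
                  (Q {h | ev h (ω i).1 = a}).toReal * p0 (ω i).1 a ^ (1 - α))
              + ((klDiv Q P).toReal + Real.log (8 / (δ * α))) / (n * lam)
              + lam / 2 * ((n : ℝ)⁻¹ * ∑ i,
                  ((∑ a, p0 (ω i).1 a *
                      ((Q {h | ev h (ω i).1 = a}).toReal / p0 (ω i).1 a ^ (4 * α)))
                    + (Q {h | ev h (ω i).1 = (ω i).2}).toReal * c (ω i).1 (ω i).2 ^ 2
                        / p0 (ω i).1 (ω i).2 ^ (4 * α)))} := by
  obtain rfl : p0 = fun x a ↦ (κ0 x).real {a} := by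
    ext x a
    simp [Measure.real, hκ0, (hp0pos x a).le]
  have hcint (a : Fin K) : Integrable (fun x ↦ c x a) ν :=
    .of_bound (hcmeas a).aestronglyMeasurable 1
      (.of_forall fun x ↦ abs_le.2 ⟨(hc x a).1, (hc x a).2.trans zero_le_one⟩)
  refine (pac_bayes_ips_alpha_uniform_alpha_general (π₀ := κ0) hcmeas hcint
    (fun x a ↦ (hc x a).2) hev P hn hδ.1 hlam).trans (measure_mono fun ω hω Q hQ hkl α hα ↦ ?_)
  rw [klDiv_eq_informationTheory_klDiv] at hkl ⊢
  have hδα : 0 < δ * α := mul_pos hδ.1 hα.1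
  have hbias := ips_bias_nonneg (π₀ := κ0) (Q := Q) hev hα.2 ω
  have hlog : ((InformationTheory.klDiv Q P).toReal + log (2 / (δ * α))) / (n * lam)
      ≤ ((InformationTheory.klDiv Q P).toReal + log (8 / (δ * α))) / (n * lam) := by
    gcongr
    norm_num
  have hmoment := mul_le_mul_of_nonneg_left (ipsSecondMoment_le_add_sum (π₀ := κ0) (c := c)
    (α := 2 * α) (gibbsPolicy_nonneg (ev := ev) Q) ω) (half_pos hlam).le
  rw [show 2 * (2 * α) = 4 * α by ring] at hmoment
  have hbound := hω Q hQ hkl α hα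
  simp only [policyRisk, ipsEstimate, gibbsPolicy] at hbound hbias hmoment
  have hsqrt := Real.sqrt_nonneg (((InformationTheory.klDiv Q P).toReal
    + log (8 * √n / (δ * α))) / (2 * n))
  linarith
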